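/- Let E be a real Banach space in which every vector has a unique norming functional, denoted J(v), and suppose E has the Opial-type duality property. Let (S_n) be a sequence of invertible linear isometries of E and let P : E → E be a continuous linear idempotent such that S_n → P and S_n⁻¹ → P in the weak operator topology. Then for every v ∈ ker P and every w ∈ range P one has (J v)(w) = 0. -/

import Mathlib

open Filter Topology

/-!
If `f` is a norming functional of `v` and `S` is an invertible isometry, then `f ∘ S⁻¹` is a norming
functional of `S v`. So when `S i v` is weakly null, the Opial-type duality property makes
`f ∘ (S i)⁻¹` weak-* null, and `f` vanishes at every weak limit of a family `(S i)⁻¹ u`.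
-/

section NormingFunctional

variable {𝕜 E F : Type*} [RCLike 𝕜]
  [NormedAddCommGroup E] [NormedSpace 𝕜 E] [NormedAddCommGroup F] [NormedSpace 𝕜 F]

/-- `f` is a norming functional of `v`, i.e. a value at `v` of the (in general multivalued) duality
map of the space. -/
def IsNormingFunctional (f : StrongDual 𝕜 E) (v : E) : Prop :=
  ‖f‖ = ‖v‖ ∧ f v = (‖v‖ : 𝕜) ^ 2

theorem IsNormingFunctional.comp_symm {f : StrongDual 𝕜 E} {v : E}
    (hf : IsNormingFunctional f v) (S : E ≃ₗᵢ[𝕜] F) :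
    IsNormingFunctional (f.comp (S.symm : F →L[𝕜] E)) (S v) := by
  constructor
  · rw [S.norm_map, ← hf.1]
    exact f.opNorm_comp_linearIsometryEquiv S.symm
  · simpa using hf.2

variable {ι : Type*} {l : Filter ι}

/-- The Opial-type duality property along the filter `l`; the sequential property is the case
`l = atTop` on `ℕ`. Norming functionals need not be unique, so every choice of them is
considered. -/
def HasOpialDuality (𝕜 E : Type*) [RCLike 𝕜] [NormedAddCommGroup E] [NormedSpace 𝕜 E]
    (l : Filter ι) : Prop :=
  ∀ (x : ι → E) (f : ι → StrongDual 𝕜 E), (∀ i, IsNormingFunctional (f i) (x i)) →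
    (∀ g : StrongDual 𝕜 E, Tendsto (fun i => g (x i)) l (𝓝 0)) →
    ∀ v : E, Tendsto (fun i => f i v) l (𝓝 0)

theorem hasOpialDuality_of_unique {J : E → StrongDual 𝕜 E}
    (hunique : ∀ (v : E) (f : StrongDual 𝕜 E), IsNormingFunctional f v → f = J v)
    (hJ : ∀ x : ι → E, (∀ g : StrongDual 𝕜 E, Tendsto (fun i => g (x i)) l (𝓝 0)) →
      ∀ v : E, Tendsto (fun i => J (x i) v) l (𝓝 0)) :
    HasOpialDuality 𝕜 E l := by
  intro x f hf hx v
  obtain rfl : f = fun i => J (x i) := funext fun i => hunique (x i) (f i) (hf i)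
  exact hJ x hx v

theorem HasOpialDuality.tendsto_apply_symm (hF : HasOpialDuality 𝕜 F l)
    {f : StrongDual 𝕜 E} {v : E} (hf : IsNormingFunctional f v) {S : ι → (E ≃ₗᵢ[𝕜] F)}
    (hSv : ∀ g : StrongDual 𝕜 F, Tendsto (fun i => g (S i v)) l (𝓝 0)) (u : F) :
    Tendsto (fun i => f ((S i).symm u)) l (𝓝 0) :=
  hF (fun i => S i v) _ (fun i => hf.comp_symm (S i)) hSv u

theorem norming_functional_vanishes_on_invariants_general [l.NeBot]
    (hF : HasOpialDuality 𝕜 F l) {f : StrongDual 𝕜 E} {v w : E} {u : F}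
    (hf : IsNormingFunctional f v) {S : ι → (E ≃ₗᵢ[𝕜] F)}
    (hSv : ∀ g : StrongDual 𝕜 F, Tendsto (fun i => g (S i v)) l (𝓝 0))
    (hSu : ∀ g : StrongDual 𝕜 E, Tendsto (fun i => g ((S i).symm u)) l (𝓝 (g w))) :
    f w = 0 :=
  tendsto_nhds_unique (hSu f) (hF.tendsto_apply_symm hf hSv u)

end NormingFunctional

/-- Under the same hypotheses as the main theorem, the norming functional of any
vector `v ∈ ker P` vanishes on all of `range P`. -/
theorem norming_functional_vanishes_on_invariants
    {E : Type*} [NormedAddCommGroup E] [NormedSpace ℝ E] [CompleteSpace E]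
    (J : E → (E →L[ℝ] ℝ))
    (hJ : ∀ v : E, ‖J v‖ = ‖v‖ ∧ J v v = ‖v‖ ^ 2)
    (hJuniq : ∀ (v : E) (f : E →L[ℝ] ℝ), ‖f‖ = ‖v‖ → f v = ‖v‖ ^ 2 → f = J v)
    (hOpial : ∀ x : ℕ → E,
      (∀ f : E →L[ℝ] ℝ, Tendsto (fun n => f (x n)) atTop (𝓝 0)) →
      ∀ v : E, Tendsto (fun n => J (x n) v) atTop (𝓝 0))
    (S : ℕ → (E ≃ₗᵢ[ℝ] E))
    (P : E →L[ℝ] E) (hP : P.comp P = P)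
    (hWOT : ∀ (v : E) (f : E →L[ℝ] ℝ),
      Tendsto (fun n => f (S n v)) atTop (𝓝 (f (P v))))
    (hWOTinv : ∀ (v : E) (f : E →L[ℝ] ℝ),
      Tendsto (fun n => f ((S n).symm v)) atTop (𝓝 (f (P v)))) :
    ∀ v w : E, P v = 0 → (∃ u, P u = w) → J v w = 0 := by
  rintro v _ hv ⟨u, rfl⟩
  have hE : HasOpialDuality ℝ E (atTop : Filter ℕ) :=
    hasOpialDuality_of_unique (fun v f hf => hJuniq v f hf.1 hf.2) hOpial
  exact norming_functional_vanishes_on_invariants_general hE (hJ v)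
    (by simpa only [hv, map_zero] using hWOT v) (hWOTinv u)
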